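/- Let a be a ribbon with signature σ = σ(a). Then every extension f of a has at least 1 − σ/2 points in the open unit disk that are local extrema (local maxima or local minima) of f. -/

import Mathlib

open scoped RealInnerProductSpace

noncomputable section

abbrev E2 : Type := EuclideanSpace ℝ (Fin 2)

/-- The point (cos t, sin t) on the unit circle in ℝ². -/
def sphPt (t : ℝ) : E2 := (EuclideanSpace.equiv (Fin 2) ℝ).symm ![Real.cos t, Real.sin t]

/-- A ribbon with `n` nodes, encoded via the angle parametrization `g = φ ∘ (cos, sin)`
of a C^∞ function `φ : S¹ → ℝ` whose critical points on the circle are exactly the `n`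
nondegenerate local extrema (nodes) at angles `θ 0 < θ 1 < ⋯ < θ (n-1)` in `[0, 2π)`,
with pairwise distinct critical values, together with a marking `ν` of the nodes by `±1`. -/
structure Ribbon (n : ℕ) : Type where
  g : ℝ → ℝ
  θ : Fin n → ℝ
  ν : Fin n → ℤ
  n_even : Even n
  n_pos : 0 < n
  smooth_g : ContDiff ℝ (⊤ : ℕ∞) g
  periodic_g : Function.Periodic g (2 * Real.pi)
  theta_mem : ∀ i, θ i ∈ Set.Ico (0 : ℝ) (2 * Real.pi)
  theta_mono : StrictMono θ
  node_crit : ∀ i, deriv g (θ i) = 0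
  node_nondeg : ∀ i, deriv (deriv g) (θ i) ≠ 0
  crit_only : ∀ t ∈ Set.Ico (0 : ℝ) (2 * Real.pi), deriv g t = 0 → ∃ i, t = θ i
  values_distinct : ∀ i j, g (θ i) = g (θ j) → i = j
  nu_sign : ∀ i, ν i = 1 ∨ ν i = -1

/-- The signature σ = s₊ − s₋ of a ribbon. -/
def Ribbon.sigma {n : ℕ} (a : Ribbon n) : ℤ := ∑ i, a.ν i

/-- Critical points of `f` in the open unit disk. -/
def critPts (f : E2 → ℝ) : Set E2 :=
  {x | x ∈ Metric.ball (0 : E2) 1 ∧ fderiv ℝ f x = 0}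

/-- `f : ℝ² → ℝ` is an extension of the ribbon `a`: it is C^∞, agrees with `φ` on the unit
circle, has nowhere-vanishing gradient on the circle, and at each node the radial derivative
`⟪∇f(p), p⟫` has sign `ν p` if `p` is a local maximum of `φ` (second derivative of `g`
negative there) and sign `−ν p` if `p` is a local minimum of `φ`. -/
def IsExtension {n : ℕ} (a : Ribbon n) (f : E2 → ℝ) : Prop :=
  ContDiff ℝ (⊤ : ℕ∞) f ∧
  (∀ t : ℝ, f (sphPt t) = a.g t) ∧
  (∀ x ∈ Metric.sphere (0 : E2) 1, fderiv ℝ f x ≠ 0) ∧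
  (∀ i : Fin n,
    (deriv (deriv a.g) (a.θ i) < 0 →
      0 < (a.ν i : ℝ) * ⟪gradient f (sphPt (a.θ i)), sphPt (a.θ i)⟫) ∧
    (0 < deriv (deriv a.g) (a.θ i) →
      (a.ν i : ℝ) * ⟪gradient f (sphPt (a.θ i)), sphPt (a.θ i)⟫ < 0))

/-- The ribbon invariant γ: the infimum, over all extensions `f` of `a`, of the number of
critical points of `f` in the open unit disk (a value in `ℕ∞`). -/
def gammaR {n : ℕ} (a : Ribbon n) : ℕ∞ :=
  sInf {k : ℕ∞ | ∃ f : E2 → ℝ, IsExtension a f ∧ (critPts f).encard = k}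

lemma arg_one_sub_exp {ψ : ℝ} (h0 : 0 < ψ) (h1 : ψ < 2 * Real.pi) :
    (Complex.log (1 - Complex.exp (ψ * Complex.I))).im = (ψ - Real.pi) / 2 := by
  rw [Complex.log_im]
  have hs : 0 < 2 * Real.sin (ψ / 2) := by
    have := Real.sin_pos_of_pos_of_lt_pi (x := ψ / 2) (by linarith) (by linarith)
    linarith
  have key : (1 - Complex.exp (ψ * Complex.I)) =
      ((2 * Real.sin (ψ / 2) : ℝ) : ℂ) * (Complex.cos (((ψ - Real.pi) / 2 : ℝ) : ℂ)
        + Complex.sin (((ψ - Real.pi) / 2 : ℝ) : ℂ) * Complex.I) := by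
    have e1 : Real.cos ((ψ - Real.pi) / 2) = Real.sin (ψ / 2) := by
      rw [show (ψ - Real.pi) / 2 = ψ / 2 - Real.pi / 2 by ring, Real.cos_sub_pi_div_two]
    have e2 : Real.sin ((ψ - Real.pi) / 2) = - Real.cos (ψ / 2) := by
      rw [show (ψ - Real.pi) / 2 = ψ / 2 - Real.pi / 2 by ring, Real.sin_sub_pi_div_two]
    have e3 : Real.cos ψ = 1 - 2 * Real.sin (ψ / 2) ^ 2 := by
      have := Real.cos_two_mul (ψ / 2)
      have h2 := Real.sin_sq_add_cos_sq (ψ / 2)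
      rw [show 2 * (ψ / 2) = ψ by ring] at this
      linarith
    have e4 : Real.sin ψ = 2 * Real.sin (ψ / 2) * Real.cos (ψ / 2) := by
      have := Real.sin_two_mul (ψ / 2)
      rwa [show 2 * (ψ / 2) = ψ by ring] at this
    rw [Complex.exp_mul_I, ← Complex.ofReal_cos, ← Complex.ofReal_sin, ← Complex.ofReal_cos,
      ← Complex.ofReal_sin, e1, e2, e3, e4]
    push_cast
    ring
  rw [key, Complex.arg_mul_cos_add_sin_mul_I hs ⟨by linarith, by linarith⟩]

lemma edge_lift {L γ : ℝ → ℂ} (hL : Continuous L) (hγ : Continuous γ) (w : ℂ)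
    (hle : ∀ s, ‖γ s‖ ≤ 1) (hne : ∀ s, γ s ≠ 1)
    (hexp : ∀ s, Complex.exp (L s) = w * (1 - γ s)) :
    (L 1).im - (L 0).im = (Complex.log (1 - γ 1)).im - (Complex.log (1 - γ 0)).im := by
  have hre : ∀ s, 0 < (1 - γ s).re := by
    intro s
    have h1 := hle s
    have h2 := Complex.re_le_norm (γ s)
    rcases lt_or_eq_of_le (h2.trans h1) with h | h
    · simp; exact h
    · exfalso
      apply hne s
      have h3 : Complex.normSq (γ s) ≤ 1 := by
        rw [Complex.normSq_eq_norm_sq]; nlinarith [norm_nonneg (γ s)]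
      rw [Complex.normSq_apply, h] at h3
      have : (γ s).im = 0 := by nlinarith
      apply Complex.ext <;> simp [*]
  have hsl : ∀ s, (1 - γ s) ∈ Complex.slitPlane := fun s => Or.inl (hre s)
  have hlog : Continuous (fun s => Complex.log (1 - γ s)) :=
    Continuous.clog (by fun_prop) hsl
  have hz : ∀ s, (1 - γ s) ≠ 0 := fun s => sub_ne_zero.2 (hne s).symm
  have := Complex.isCoveringMap_exp.eq_of_comp_eq (A := ℝ) hL
    (hlog.add (continuous_const (y := L 0 - Complex.log (1 - γ 0)))) (by
      funext s
      apply Subtype.ext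
      simp only [Function.comp, Pi.add_apply]
      rw [Complex.exp_add, Complex.exp_sub, Complex.exp_log (hz s), Complex.exp_log (hz 0),
        hexp, hexp]
      field_simp [hz 0]) 0 (by simp)
  have h1 := congrFun this 1
  simp only [Pi.add_apply] at h1
  rw [h1]
  simp
  ring

lemma crossing {α β : ℝ → ℂ} (hα : Continuous α) (hβ : Continuous β)
    (hα1 : ∀ s, ‖α s‖ ≤ 1) (hβ1 : ∀ s, ‖β s‖ ≤ 1) {a0 b0 a1 b1 : ℝ}
    (h1 : a0 < b0) (h2 : b0 < a1) (h3 : a1 < b1) (h4 : b1 < a0 + 2 * Real.pi)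
    (ha0 : α 0 = Complex.exp (a0 * Complex.I)) (ha1 : α 1 = Complex.exp (a1 * Complex.I))
    (hb0 : β 0 = Complex.exp (b0 * Complex.I)) (hb1 : β 1 = Complex.exp (b1 * Complex.I)) :
    ∃ s t, α s = β t := by
  by_contra hcon
  push Not at hcon
  obtain ⟨L, hL, hexp⟩ := Complex.exists_continuousOn_eqOn_exp_comp (X := ℝ × ℝ)
    (U := Set.univ) (g := fun x => α x.1 - β x.2)
    (by
      have := (convex_univ (𝕜 := ℝ) (E := ℝ × ℝ)).contractibleSpace Set.univ_nonempty
      exact (inferInstance : SimplyConnectedSpace (Set.univ : Set (ℝ × ℝ)))) isOpen_univ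
    (by fun_prop) (by
      rintro ⟨x, -, hx⟩
      exact hcon _ _ (sub_eq_zero.1 hx))
  rw [continuousOn_univ] at hL
  have hexp' : ∀ s t, Complex.exp (L (s, t)) = α s - β t := fun s t => hexp (Set.mem_univ (s, t))
  have key1 : ∀ (u : ℝ), ∀ t, β t = Complex.exp (u * Complex.I) →
      (L (1, t)).im - (L (0, t)).im = (Complex.log (1 - Complex.exp ((a1 - u : ℝ) * Complex.I))).im
        - (Complex.log (1 - Complex.exp ((a0 - u : ℝ) * Complex.I))).im := by
    intro u t ht
    have hn : ‖Complex.exp (-(u * Complex.I))‖ = 1 := by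
      have := Complex.norm_exp_ofReal_mul_I (-u)
      simpa using this
    have := edge_lift (L := fun s => L (s, t)) (γ := fun s => α s * Complex.exp (-(u * Complex.I)))
      (by fun_prop) (by fun_prop) (- Complex.exp (u * Complex.I))
      (by intro s; rw [norm_mul, hn, mul_one]; exact hα1 s)
      (by
        intro s hs
        apply hcon s t
        rw [ht]
        rw [Complex.exp_neg] at hs
        exact eq_of_mul_inv_eq_one hs)
      (by
        intro s
        rw [hexp', ht, Complex.exp_neg]
        field_simp [Complex.exp_ne_zero]
        ring)
    simp only [ha0, ha1, ← Complex.exp_add] at this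
    rw [this]
    push_cast
    ring_nf
  have key2 : ∀ (u : ℝ), ∀ t, α t = Complex.exp (u * Complex.I) →
      (L (t, 1)).im - (L (t, 0)).im = (Complex.log (1 - Complex.exp ((b1 - u : ℝ) * Complex.I))).im
        - (Complex.log (1 - Complex.exp ((b0 - u : ℝ) * Complex.I))).im := by
    intro u t ht
    have hn : ‖Complex.exp (-(u * Complex.I))‖ = 1 := by
      have := Complex.norm_exp_ofReal_mul_I (-u)
      simpa using this
    have := edge_lift (L := fun s => L (t, s)) (γ := fun s => β s * Complex.exp (-(u * Complex.I)))
      (by fun_prop) (by fun_prop) (Complex.exp (u * Complex.I))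
      (by intro s; rw [norm_mul, hn, mul_one]; exact hβ1 s)
      (by
        intro s hs
        apply hcon t s
        rw [ht]
        rw [Complex.exp_neg] at hs
        exact (eq_of_mul_inv_eq_one hs).symm)
      (by
        intro s
        rw [hexp', ht, Complex.exp_neg]
        field_simp [Complex.exp_ne_zero])
    simp only [hb0, hb1, ← Complex.exp_add] at this
    rw [this]
    push_cast
    ring_nf
  have per : ∀ x : ℝ, Complex.exp ((x : ℝ) * Complex.I)
      = Complex.exp ((x + 2 * Real.pi : ℝ) * Complex.I) := by
    intro x
    rw [← Complex.exp_periodic (x * Complex.I)]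
    push_cast
    ring_nf
  have e1 := key1 b0 0 hb0
  have e2 := key1 b1 1 hb1
  have e3 := key2 a0 0 ha0
  have e4 := key2 a1 1 ha1
  rw [per (a0 - b0), arg_one_sub_exp (by linarith) (by linarith),
    arg_one_sub_exp (by linarith) (by linarith)] at e1
  rw [per (a0 - b1), per (a1 - b1), arg_one_sub_exp (by linarith) (by linarith),
    arg_one_sub_exp (by linarith) (by linarith)] at e2
  rw [arg_one_sub_exp (by linarith) (by linarith),
    arg_one_sub_exp (by linarith) (by linarith)] at e3
  rw [per (b0 - a1), arg_one_sub_exp (by linarith) (by linarith),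
    arg_one_sub_exp (by linarith) (by linarith)] at e4
  linarith [Real.pi_pos]

/-- closed disk -/
def Dk : Set E2 := Metric.closedBall (0 : E2) 1

/-- superlevel set in the closed disk -/
def Sup (f : E2 → ℝ) (c : ℝ) : Set E2 := {x | x ∈ Dk ∧ c < f x}

lemma Sup_anti (f : E2 → ℝ) {c c' : ℝ} (h : c' ≤ c) : Sup f c ⊆ Sup f c' :=
  fun _ hx => ⟨hx.1, lt_of_le_of_lt h hx.2⟩

lemma exists_locMax {f : E2 → ℝ} (hf : Continuous f) {c : ℝ} {x : E2} (hx : x ∈ Sup f c) :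
    ∃ m, m ∈ Dk ∧ IsLocalMaxOn f Dk m ∧ JoinedIn (Sup f c) x m := by
  set P : Set E2 := {y | JoinedIn (Sup f c) x y} with hP
  have hPD : P ⊆ Dk := fun y hy => hy.target_mem.1
  have hclD : closure P ⊆ Dk := closure_minimal hPD Metric.isClosed_closedBall
  have hK : IsCompact (closure P) :=
    (isCompact_closedBall (0 : E2) 1).of_isClosed_subset isClosed_closure hclD
  have hxP : x ∈ P := JoinedIn.refl hx
  obtain ⟨m, hm, hmax⟩ := hK.exists_isMaxOn ⟨x, subset_closure hxP⟩ hf.continuousOn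
  have hmc : c < f m := lt_of_lt_of_le hx.2 (hmax (subset_closure hxP))
  obtain ⟨ε, hε, hball⟩ := Metric.isOpen_iff.1 (isOpen_lt continuous_const hf) m hmc
  have hconv : Convex ℝ (Metric.ball m ε ∩ Dk) :=
    (convex_ball m ε).inter (convex_closedBall _ _)
  have hsub : Metric.ball m ε ∩ Dk ⊆ Sup f c := fun y hy => ⟨hy.2, hball hy.1⟩
  have hj : ∀ y ∈ Metric.ball m ε ∩ Dk, ∀ z ∈ Metric.ball m ε ∩ Dk, JoinedIn (Sup f c) y z := by
    intro y hy z hz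
    exact (JoinedIn.of_segment_subset (hconv.segment_subset hy hz)).mono hsub
  have hmm : m ∈ Metric.ball m ε ∩ Dk := ⟨Metric.mem_ball_self hε, hclD hm⟩
  obtain ⟨y, hyb, hyP⟩ := mem_closure_iff.1 hm _ Metric.isOpen_ball (Metric.mem_ball_self hε)
  have hmP : JoinedIn (Sup f c) x m := hyP.trans (hj y ⟨hyb, hPD hyP⟩ m hmm)
  refine ⟨m, hclD hm, ?_, hmP⟩
  filter_upwards [inter_mem_nhdsWithin Dk (Metric.ball_mem_nhds m hε)] with z hz
  exact hmax (subset_closure (hmP.trans (hj m hmm z ⟨hz.2, hz.1⟩) : JoinedIn (Sup f c) x z))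

lemma sphPt_continuous : Continuous sphPt := by
  unfold sphPt
  refine (EuclideanSpace.equiv (Fin 2) ℝ).symm.continuous.comp ?_
  refine continuous_pi fun i => ?_
  fin_cases i <;> simp <;> fun_prop

lemma sphPt_zero (t : ℝ) : sphPt t 0 = Real.cos t := by simp [sphPt]

lemma sphPt_one (t : ℝ) : sphPt t 1 = Real.sin t := by simp [sphPt]

lemma norm_sphPt (t : ℝ) : ‖sphPt t‖ = 1 := by
  rw [EuclideanSpace.norm_eq]
  simp [sphPt_zero, sphPt_one]

lemma sphPt_mem (t : ℝ) : sphPt t ∈ Dk := by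
  simp [Dk, norm_sphPt]

lemma sphPt_periodic : Function.Periodic sphPt (2 * Real.pi) := by
  intro t
  simp [sphPt]

/-- to the complex numbers -/
def toC (x : E2) : ℂ := (x 0 : ℂ) + (x 1 : ℂ) * Complex.I

lemma toC_continuous : Continuous toC := by
  unfold toC
  fun_prop

lemma norm_toC (x : E2) : ‖toC x‖ = ‖x‖ := by
  rw [toC, Complex.norm_add_mul_I, EuclideanSpace.norm_eq]
  simp

lemma toC_inj {x y : E2} (h : toC x = toC y) : x = y := by
  have h0 := congrArg Complex.re h
  have h1 := congrArg Complex.im h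
  simp [toC] at h0 h1
  ext i
  fin_cases i <;> simp [*]

lemma toC_sphPt (t : ℝ) : toC (sphPt t) = Complex.exp (t * Complex.I) := by
  rw [toC, sphPt_zero, sphPt_one, Complex.exp_mul_I]
  simp

lemma exists_angle (t0 : ℝ) {q : E2} (hq : ‖q‖ = 1) :
    ∃ t ∈ Set.Ico t0 (t0 + 2 * Real.pi), q = sphPt t := by
  have h1 : q = sphPt (toC q).arg := by
    apply toC_inj
    rw [toC_sphPt]
    have := Complex.norm_mul_exp_arg_mul_I (toC q)
    rw [norm_toC, hq] at this
    simpa using this.symm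
  obtain ⟨y, hy, hy2⟩ := sphPt_periodic.exists_mem_Ico Real.two_pi_pos (toC q).arg t0
  exact ⟨y, hy, h1.trans hy2⟩

lemma crossE2 {S T : Set E2} (hS : S ⊆ Dk) (hT : T ⊆ Dk) (hdisj : Disjoint S T)
    {a0 b0 a1 b1 : ℝ}
    (h1 : a0 < b0) (h2 : b0 < a1) (h3 : a1 < b1) (h4 : b1 < a0 + 2 * Real.pi)
    (hα : JoinedIn S (sphPt a0) (sphPt a1)) (hβ : JoinedIn T (sphPt b0) (sphPt b1)) : False := by
  obtain ⟨α, hα⟩ := hα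
  obtain ⟨β, hβ⟩ := hβ
  have mα : ∀ s, α.extend s ∈ S := fun s => by
    have : α.extend s ∈ Set.range α.extend := ⟨s, rfl⟩
    rw [Path.extend_range] at this
    obtain ⟨u, hu⟩ := this
    exact hu ▸ hα u
  have mβ : ∀ s, β.extend s ∈ T := fun s => by
    have : β.extend s ∈ Set.range β.extend := ⟨s, rfl⟩
    rw [Path.extend_range] at this
    obtain ⟨u, hu⟩ := this
    exact hu ▸ hβ u
  have nD : ∀ x ∈ Dk, ‖toC x‖ ≤ 1 := fun x hx => by
    rw [norm_toC]; simpa [Dk] using hx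
  obtain ⟨s, t, hst⟩ := crossing (α := fun s => toC (α.extend s)) (β := fun s => toC (β.extend s))
    (toC_continuous.comp α.continuous_extend) (toC_continuous.comp β.continuous_extend)
    (fun s => nD _ (hS (mα s))) (fun s => nD _ (hT (mβ s))) h1 h2 h3 h4
    (by simp [toC_sphPt]) (by simp [toC_sphPt]) (by simp [toC_sphPt]) (by simp [toC_sphPt])
  have := toC_inj hst
  exact Set.disjoint_left.1 hdisj (mα s) (this ▸ mβ t)

lemma merge_part {ι : Type*} {f : E2 → ℝ} (hf : Continuous f) (J : Set ι) (θ δ : ι → ℝ)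
    (hδ : ∀ i ∈ J, 0 < δ i)
    (ha : ∀ i ∈ J, ∀ t, 0 < |t| → |t| ≤ δ i → f (sphPt (θ i)) < f (sphPt (θ i + t)))
    (hc : ∀ i ∈ J, ∀ j ∈ J, f (sphPt (θ i)) = f (sphPt (θ j)) → i = j)
    (hM : {x | x ∈ Dk ∧ IsLocalMaxOn f Dk x}.Finite)
    (hmerge : ∀ i ∈ J, ¬ JoinedIn (Sup f (f (sphPt (θ i)))) (sphPt (θ i - δ i))
      (sphPt (θ i + δ i))) :
    J.ncard + 1 ≤ {x | x ∈ Dk ∧ IsLocalMaxOn f Dk x}.ncard := by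
  set M := {x | x ∈ Dk ∧ IsLocalMaxOn f Dk x} with hMdef
  obtain ⟨r, hr⟩ := Set.countable_iff_exists_injOn.1 hM.countable
  have htop : ∀ c, ∀ x ∈ Sup f c, ∃ m ∈ M, JoinedIn (Sup f c) x m ∧
      ∀ m' ∈ M, JoinedIn (Sup f c) x m' → r m' ≤ r m := by
    intro c x hx
    obtain ⟨m0, h1, h2, h3⟩ := exists_locMax hf hx
    obtain ⟨m, hm, hmax⟩ := Set.exists_max_image {m | m ∈ M ∧ JoinedIn (Sup f c) x m} r
      (hM.subset fun _ h => h.1) ⟨m0, ⟨h1, h2⟩, h3⟩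
    exact ⟨m, hm.1, hm.2, fun m' h h' => hmax m' ⟨h, h'⟩⟩
  have hMne : M.Nonempty := by
    obtain ⟨m, h1, h2, -⟩ := exists_locMax hf (c := f (sphPt 0) - 1) (x := sphPt 0)
      ⟨sphPt_mem 0, by linarith⟩
    exact ⟨m, h1, h2⟩
  obtain ⟨top, htopM, htopmax⟩ := Set.exists_max_image M r hM hMne
  have key : ∀ i ∈ J, ∃ m ∈ M, ∃ m' ∈ M, r m < r m' ∧
      (∀ m'' ∈ M, JoinedIn (Sup f (f (sphPt (θ i)))) m m'' → r m'' ≤ r m) ∧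
      ∀ c' < f (sphPt (θ i)), JoinedIn (Sup f c') m m' := by
    intro i hi
    have hd := hδ i hi
    have hL : sphPt (θ i - δ i) ∈ Sup f (f (sphPt (θ i))) :=
      ⟨sphPt_mem _, ha i hi (-δ i) (by rw [abs_neg, abs_of_pos hd]; exact hd)
        (by rw [abs_neg, abs_of_pos hd])⟩
    have hR : sphPt (θ i + δ i) ∈ Sup f (f (sphPt (θ i))) :=
      ⟨sphPt_mem _, ha i hi (δ i) (by rw [abs_of_pos hd]; exact hd)
        (by rw [abs_of_pos hd])⟩
    have hLR : ∀ c' < f (sphPt (θ i)), JoinedIn (Sup f c') (sphPt (θ i - δ i))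
        (sphPt (θ i + δ i)) := by
      intro c' hc'
      have hpc : IsPathConnected (sphPt '' Set.Icc (θ i - δ i) (θ i + δ i)) :=
        ((convex_Icc _ _).isPathConnected ⟨θ i, by constructor <;> linarith⟩).image
          sphPt_continuous
      refine (hpc.joinedIn _ ⟨_, ⟨le_refl _, by linarith⟩, rfl⟩ _
        ⟨_, ⟨by linarith, le_refl _⟩, rfl⟩).mono ?_
      rintro _ ⟨t, ht, rfl⟩
      refine ⟨sphPt_mem _, ?_⟩
      by_cases h0 : t = θ i
      · rw [h0]; exact hc'
      · have := ha i hi (t - θ i) (abs_pos.2 (sub_ne_zero.2 h0))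
          (abs_le.2 ⟨by linarith [ht.1], by linarith [ht.2]⟩)
        rw [add_sub_cancel] at this
        linarith
    obtain ⟨m1, hm1, hj1, ht1⟩ := htop _ _ hL
    obtain ⟨m2, hm2, hj2, ht2⟩ := htop _ _ hR
    have hne : r m1 ≠ r m2 := by
      intro h
      have := hr hm1 hm2 h
      subst this
      exact hmerge i hi (hj1.trans hj2.symm)
    have hj12 : ∀ c' < f (sphPt (θ i)), JoinedIn (Sup f c') m1 m2 := fun c' hc' =>
      ((hj1.mono (Sup_anti f hc'.le)).symm.trans (hLR c' hc')).trans (hj2.mono (Sup_anti f hc'.le))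
    rcases lt_or_gt_of_ne hne with h | h
    · exact ⟨m1, hm1, m2, hm2, h, fun m'' hm'' hj => ht1 m'' hm'' (hj1.trans hj), hj12⟩
    · exact ⟨m2, hm2, m1, hm1, h, fun m'' hm'' hj => ht2 m'' hm'' (hj2.trans hj),
        fun c' hc' => (hj12 c' hc').symm⟩
  choose! m hm m' hm' hlt hmx hjn using key
  have h1 : J.ncard ≤ (M \ {top}).ncard := by
    refine Set.ncard_le_ncard_of_injOn m ?_ ?_ (hM.subset Set.sdiff_subset)
    · intro i hi
      refine ⟨hm i hi, fun h => ?_⟩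
      have h2 := htopmax (m' i) (hm' i hi)
      have h3 := hlt i hi
      rw [Set.mem_singleton_iff.1 h] at h3
      omega
    · have aux : ∀ i ∈ J, ∀ j ∈ J, m i = m j → f (sphPt (θ i)) < f (sphPt (θ j)) → False := by
        intro i hi j hj h hl
        have h2 := hmx i hi (m' j) (hm' j hj) (h ▸ hjn j hj _ hl)
        have h3 := hlt j hj
        rw [← h] at h3
        omega
      intro i hi j hj h
      rcases lt_trichotomy (f (sphPt (θ i))) (f (sphPt (θ j))) with h' | h' | h'
      · exact (aux i hi j hj h h').elim
      · exact hc i hi j hj h'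
      · exact (aux j hj i hi h.symm h').elim
  have h2 := Set.ncard_sdiff_singleton_add_one htopM hM
  omega

lemma nonmerge_part {ι : Type*} {f : E2 → ℝ} (hf : Continuous f) (J : Set ι) (θ δ ε : ι → ℝ)
    (hδ : ∀ i ∈ J, 0 < δ i) (hε : ∀ i ∈ J, 0 < ε i) (hε1 : ∀ i ∈ J, ε i ≤ 1)
    (ha : ∀ i ∈ J, ∀ t, 0 < |t| → |t| ≤ δ i → f (sphPt (θ i)) < f (sphPt (θ i + t)))
    (hb : ∀ i ∈ J, ∀ r, 0 < r → r ≤ ε i → f ((1 - r) • sphPt (θ i)) < f (sphPt (θ i)))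
    (hc : ∀ i ∈ J, ∀ j ∈ J, f (sphPt (θ i)) = f (sphPt (θ j)) → i = j)
    (hM : {x | x ∈ Metric.ball (0 : E2) 1 ∧ IsLocalMin f x}.Finite)
    (hmerge : ∀ i ∈ J, JoinedIn (Sup f (f (sphPt (θ i)))) (sphPt (θ i - δ i))
      (sphPt (θ i + δ i))) :
    J.ncard ≤ {x | x ∈ Metric.ball (0 : E2) 1 ∧ IsLocalMin f x}.ncard := by
  have hseg : ∀ i ∈ J, JoinedIn {x | x ∈ Dk ∧ f x ≤ f (sphPt (θ i))} (sphPt (θ i))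
      ((1 - ε i) • sphPt (θ i)) := by
    intro i hi
    refine JoinedIn.ofLine (f := fun s : ℝ => (1 - s * ε i) • sphPt (θ i)) (by fun_prop)
      (by simp) (by simp) ?_
    rintro _ ⟨s, ⟨h0, h1⟩, rfl⟩
    have e0 := hε i hi
    have e1 := hε1 i hi
    have hse : s * ε i ≤ ε i := by nlinarith
    have hse0 : 0 ≤ s * ε i := by positivity
    refine ⟨?_, ?_⟩
    · simp only [Dk, mem_closedBall_zero_iff, norm_smul, norm_sphPt, mul_one, Real.norm_eq_abs]
      rw [abs_le]; constructor <;> linarith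
    · rcases hse0.eq_or_lt with h | h
      · simp [← h]
      · exact (hb i hi _ h hse).le
  have hx0 : ∀ i ∈ J, (1 - ε i) • sphPt (θ i) ∈ Sup (fun x => - f x) (- f (sphPt (θ i))) :=
    fun i hi => ⟨(hseg i hi).target_mem.1, by
      have := hb i hi _ (hε i hi) le_rfl
      simpa using this⟩
  have hball : ∀ i ∈ J, ∀ q, JoinedIn (Sup (fun x => - f x) (- f (sphPt (θ i))))
      ((1 - ε i) • sphPt (θ i)) q → ‖q‖ ≠ 1 := by
    intro i hi q hq hn
    obtain ⟨b, hb1, rfl⟩ := exists_angle (θ i - δ i) hn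
    have hfq : f (sphPt b) < f (sphPt (θ i)) := by
      have := hq.target_mem.2
      simpa using this
    have hb2 : θ i + δ i < b := by
      by_contra hcon
      push Not at hcon
      by_cases h0 : b = θ i
      · rw [h0] at hfq; exact lt_irrefl _ hfq
      · have := ha i hi (b - θ i) (abs_pos.2 (sub_ne_zero.2 h0))
          (abs_le.2 ⟨by linarith [hb1.1], by linarith⟩)
        rw [add_sub_cancel] at this
        linarith
    have hd := hδ i hi
    refine crossE2 (S := Sup f (f (sphPt (θ i)))) (T := {x | x ∈ Dk ∧ f x ≤ f (sphPt (θ i))})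
      (fun x hx => hx.1) (fun x hx => hx.1) ?_ (a0 := θ i - δ i) (b0 := θ i) (a1 := θ i + δ i)
      (b1 := b) (by linarith) (by linarith) hb2 hb1.2 (hmerge i hi) ((hseg i hi).trans (hq.mono ?_))
    · rw [Set.disjoint_left]
      intro x hx hx'
      exact absurd hx.2 (not_lt.2 hx'.2)
    · intro x hx
      exact ⟨hx.1, by have := hx.2; simp at this; exact this.le⟩
  have key : ∀ i ∈ J, ∃ m, (m ∈ Metric.ball (0 : E2) 1 ∧ IsLocalMin f m) ∧
      JoinedIn (Sup (fun x => - f x) (- f (sphPt (θ i)))) ((1 - ε i) • sphPt (θ i)) m := by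
    intro i hi
    obtain ⟨m, hmD, hmax, hj⟩ := exists_locMax hf.neg (hx0 i hi)
    have hmb : m ∈ Metric.ball (0 : E2) 1 := by
      have h1 := hball i hi m hj
      have h2 : ‖m‖ ≤ 1 := by simpa [Dk] using hmD
      simpa using lt_of_le_of_ne h2 h1
    refine ⟨m, ⟨hmb, ?_⟩, hj⟩
    have hn : Dk ∈ nhds m := Filter.mem_of_superset (Metric.isOpen_ball.mem_nhds hmb)
      Metric.ball_subset_closedBall
    have := hmax.isLocalMax hn
    simpa using this.neg
  choose! m hm hj using key
  refine Set.ncard_le_ncard_of_injOn m hm ?_ hM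
  have aux : ∀ i ∈ J, ∀ j ∈ J, m i = m j → f (sphPt (θ i)) < f (sphPt (θ j)) → False := by
    intro i hi j hj' h hl
    have h1 : JoinedIn (Sup (fun x => - f x) (- f (sphPt (θ j)))) (sphPt (θ i)) (m i) := by
      refine ((hseg i hi).mono ?_).trans ((hj i hi).mono (Sup_anti _ (by linarith)))
      intro x hx
      exact ⟨hx.1, by have := hx.2; simp only at this ⊢; linarith⟩
    exact hball j hj' _ ((hj j hj').trans (h ▸ h1.symm)) (norm_sphPt _)
  intro i hi j hj h
  rcases lt_trichotomy (f (sphPt (θ i))) (f (sphPt (θ j))) with h' | h' | h'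
  · exact (aux i hi j hj h h').elim
  · exact hc i hi j hj h'
  · exact (aux j hj i hi h.symm h').elim

lemma half {ι : Type*} [Finite ι] {f : E2 → ℝ} (hf : Continuous f) (J : Set ι) (θ : ι → ℝ)
    (ha : ∀ i ∈ J, ∃ δ > (0 : ℝ), ∀ t, 0 < |t| → |t| ≤ δ → f (sphPt (θ i)) < f (sphPt (θ i + t)))
    (hb : ∀ i ∈ J, ∃ ε > (0 : ℝ), ε ≤ 1 ∧ ∀ r, 0 < r → r ≤ ε →
      f ((1 - r) • sphPt (θ i)) < f (sphPt (θ i)))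
    (hc : ∀ i ∈ J, ∀ j ∈ J, f (sphPt (θ i)) = f (sphPt (θ j)) → i = j)
    (hM : {x | x ∈ Dk ∧ IsLocalMaxOn f Dk x}.Finite)
    (hM' : {x | x ∈ Metric.ball (0 : E2) 1 ∧ IsLocalMin f x}.Finite) :
    J.ncard + 1 ≤ {x | x ∈ Dk ∧ IsLocalMaxOn f Dk x}.ncard +
      {x | x ∈ Metric.ball (0 : E2) 1 ∧ IsLocalMin f x}.ncard := by
  choose! δ hδ ha using ha
  choose! ε hε hε1 hb using hb
  set A : Set ι := {i | JoinedIn (Sup f (f (sphPt (θ i)))) (sphPt (θ i - δ i))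
      (sphPt (θ i + δ i))}
  have h1 := merge_part hf (J \ A) θ δ (fun i hi => hδ i hi.1) (fun i hi => ha i hi.1)
    (fun i hi j hj => hc i hi.1 j hj.1) hM (fun i hi => hi.2)
  have h2 := nonmerge_part hf (J ∩ A) θ δ ε (fun i hi => hδ i hi.1) (fun i hi => hε i hi.1)
    (fun i hi => hε1 i hi.1) (fun i hi => ha i hi.1) (fun i hi => hb i hi.1)
    (fun i hi j hj => hc i hi.1 j hj.1) hM' (fun i hi => hi.2)
  have h3 := Set.ncard_inter_add_ncard_sdiff_eq_ncard J A (Set.toFinite J)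
  omega

lemma rad_lt {f : E2 → ℝ} {p : E2} (hf : DifferentiableAt ℝ f p) (h : 0 < fderiv ℝ f p p) :
    ∃ ε > (0 : ℝ), ε ≤ 1 ∧ ∀ r, 0 < r → r ≤ ε → f ((1 - r) • p) < f p := by
  have hl : HasDerivAt (fun r : ℝ => (1 - r) • p) (-p) 0 := by
    have := ((hasDerivAt_id (0 : ℝ)).const_sub 1).smul_const p
    simpa using this
  have hd : HasDerivAt (fun r : ℝ => f ((1 - r) • p)) (fderiv ℝ f p (-p)) 0 := by
    have hf' : HasFDerivAt f (fderiv ℝ f p) ((1 - (0 : ℝ)) • p) := by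
      simpa using hf.hasFDerivAt
    exact hf'.comp_hasDerivAt 0 hl
  rw [hasDerivAt_iff_tendsto_slope] at hd
  have hneg : fderiv ℝ f p (-p) < 0 := by simpa using h
  have hev := hd.eventually (gt_mem_nhds hneg)
  rw [eventually_nhdsWithin_iff, Metric.eventually_nhds_iff] at hev
  obtain ⟨e, he, hev⟩ := hev
  refine ⟨min (e / 2) 1, by positivity, min_le_right _ _, fun r hr hr2 => ?_⟩
  have h1 : r ≤ e / 2 := hr2.trans (min_le_left _ _)
  have := hev (y := r) (by simp [abs_of_pos hr]; linarith) (by simp [hr.ne'])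
  rw [slope_def_field] at this
  simp only [sub_zero, one_smul] at this
  rw [div_neg_iff] at this
  rcases this with h | h
  · linarith [h.2]
  · linarith [h.1]

lemma strict_min {g : ℝ → ℝ} (hg : Differentiable ℝ g) {x : ℝ} (h1 : deriv g x = 0)
    (h2 : 0 < deriv (deriv g) x) :
    ∃ δ > (0 : ℝ), ∀ t, 0 < |t| → |t| ≤ δ → g x < g (x + t) := by
  have hev := eventually_nhdsWithin_sign_eq_of_deriv_pos h2 h1
  rw [Metric.eventually_nhds_iff] at hev
  obtain ⟨e, he, hev⟩ := hev
  refine ⟨e / 2, by positivity, fun t ht ht2 => ?_⟩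
  rcases lt_or_gt_of_ne (abs_pos.1 ht) with h | h
  · rw [abs_of_neg h] at ht2
    have : StrictAntiOn g (Set.Icc (x + t) x) := by
      refine strictAntiOn_of_deriv_neg (convex_Icc _ _) hg.continuous.continuousOn ?_
      intro y hy
      rw [interior_Icc] at hy
      have := hev (y := y) (by rw [Real.dist_eq, abs_lt]; constructor <;> linarith [hy.1, hy.2])
      rw [sign_neg (by linarith [hy.2] : y - x < 0)] at this
      exact sign_eq_neg_one_iff.1 this
    exact this ⟨le_rfl, by linarith⟩ ⟨by linarith, le_rfl⟩ (by linarith)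
  · rw [abs_of_pos h] at ht2
    have : StrictMonoOn g (Set.Icc x (x + t)) := by
      refine strictMonoOn_of_deriv_pos (convex_Icc _ _) hg.continuous.continuousOn ?_
      intro y hy
      rw [interior_Icc] at hy
      have := hev (y := y) (by rw [Real.dist_eq, abs_lt]; constructor <;> linarith [hy.1, hy.2])
      rw [sign_pos (by linarith [hy.1] : 0 < y - x)] at this
      exact sign_eq_one_iff.1 this
    exact this ⟨le_rfl, by linarith⟩ ⟨by linarith, le_rfl⟩ (by linarith)

lemma ribbon_half {n : ℕ} (a : Ribbon n) (f : E2 → ℝ) (hf : IsExtension a f)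
    (hE : {x : E2 | x ∈ Metric.ball (0 : E2) 1 ∧ (IsLocalMax f x ∨ IsLocalMin f x)}.Finite) :
    {i | 0 < deriv (deriv a.g) (a.θ i) ∧ a.ν i = -1}.ncard + 1 ≤
      {x : E2 | x ∈ Metric.ball (0 : E2) 1 ∧ (IsLocalMax f x ∨ IsLocalMin f x)}.ncard +
      {i | deriv (deriv a.g) (a.θ i) < 0 ∧ a.ν i = 1}.ncard := by
  obtain ⟨hsm, hfg, -, hrad⟩ := hf
  have hdf : Differentiable ℝ f := hsm.differentiable (by simp)
  have hdg : Differentiable ℝ a.g := a.smooth_g.differentiable (by simp)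
  simp only [inner_gradient_left] at hrad
  set E := {x : E2 | x ∈ Metric.ball (0 : E2) 1 ∧ (IsLocalMax f x ∨ IsLocalMin f x)} with hEdef
  set Emax := {x : E2 | x ∈ Metric.ball (0 : E2) 1 ∧ IsLocalMax f x} with hEmax
  set Emin := {x : E2 | x ∈ Metric.ball (0 : E2) 1 ∧ IsLocalMin f x} with hEmin
  set P := {i | deriv (deriv a.g) (a.θ i) < 0 ∧ a.ν i = 1} with hP
  have hEmaxE : Emax ⊆ E := fun x hx => ⟨hx.1, Or.inl hx.2⟩
  have hEminE : Emin ⊆ E := fun x hx => ⟨hx.1, Or.inr hx.2⟩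
  have hsub : {x | x ∈ Dk ∧ IsLocalMaxOn f Dk x} ⊆ Emax ∪ (fun i => sphPt (a.θ i)) '' P := by
    rintro x ⟨hxD, hx⟩
    have hx1 : ‖x‖ ≤ 1 := by simpa [Dk] using hxD
    rcases hx1.lt_or_eq with hlt | heq
    · left
      have hb : x ∈ Metric.ball (0 : E2) 1 := by simpa using hlt
      exact ⟨hb, hx.isLocalMax (Filter.mem_of_superset (Metric.isOpen_ball.mem_nhds hb)
        Metric.ball_subset_closedBall)⟩
    · right
      obtain ⟨t, ht, rfl⟩ := exists_angle 0 heq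
      rw [zero_add] at ht
      have hlg : IsLocalMax a.g t := by
        have h1 : Filter.Tendsto sphPt (nhds t) (nhdsWithin (sphPt t) Dk) :=
          tendsto_nhdsWithin_iff.2 ⟨sphPt_continuous.tendsto t,
            Filter.Eventually.of_forall sphPt_mem⟩
        have h2 := h1.eventually hx
        filter_upwards [h2] with s hs
        rw [← hfg, ← hfg]
        exact hs
      obtain ⟨i, rfl⟩ := a.crit_only t ht hlg.deriv_eq_zero
      refine ⟨i, ⟨?_, ?_⟩, rfl⟩
      · rcases lt_or_gt_of_ne (a.node_nondeg i) with h | h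
        · exact h
        · exfalso
          obtain ⟨δ, hδ, hmin⟩ := strict_min hdg (a.node_crit i) h
          obtain ⟨e, he, hmx⟩ := Metric.eventually_nhds_iff.1 hlg
          have hpos : 0 < min δ (e / 2) := by positivity
          have h1 := hmin (min δ (e / 2)) (by rw [abs_of_pos hpos]; exact hpos)
            (by rw [abs_of_pos hpos]; exact min_le_left _ _)
          have h2 := hmx (y := a.θ i + min δ (e / 2)) (by
            rw [Real.dist_eq, add_sub_cancel_left, abs_of_pos hpos]
            have := min_le_right δ (e / 2)
            linarith)
          linarith
      · by_contra hν
        have hν' : a.ν i = -1 := (a.nu_sign i).resolve_left hν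
        have hneg : deriv (deriv a.g) (a.θ i) < 0 := by
          rcases lt_or_gt_of_ne (a.node_nondeg i) with h | h
          · exact h
          · exfalso
            obtain ⟨δ, hδ, hmin⟩ := strict_min hdg (a.node_crit i) h
            obtain ⟨e, he, hmx⟩ := Metric.eventually_nhds_iff.1 hlg
            have hpos : 0 < min δ (e / 2) := by positivity
            have h1 := hmin (min δ (e / 2)) (by rw [abs_of_pos hpos]; exact hpos)
              (by rw [abs_of_pos hpos]; exact min_le_left _ _)
            have h2 := hmx (y := a.θ i + min δ (e / 2)) (by
              rw [Real.dist_eq, add_sub_cancel_left, abs_of_pos hpos]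
              have := min_le_right δ (e / 2)
              linarith)
            linarith
        have h1 := (hrad i).1 hneg
        rw [hν'] at h1
        obtain ⟨ε, hε, hε1, hr⟩ := rad_lt (f := fun x => - f x) (p := sphPt (a.θ i))
          (hdf _).neg (by
            rw [fderiv_fun_neg]
            simpa using h1)
        have hx' := eventually_nhdsWithin_iff.1 hx
        obtain ⟨e, he, hmx⟩ := Metric.eventually_nhds_iff.1 hx'
        have hpos : 0 < min ε (e / 2) := by positivity
        have h2 := hr _ hpos (min_le_left _ _)
        have h3 := min_le_right ε (e / 2)
        have h4 := min_le_left ε (e / 2)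
        have h5 := hmx (y := (1 - min ε (e / 2)) • sphPt (a.θ i)) (by
          rw [dist_eq_norm, sub_smul, one_smul, sub_sub_cancel_left, norm_neg, norm_smul,
            norm_sphPt, Real.norm_eq_abs, abs_of_pos hpos]
          linarith) (by
          simp only [Dk, mem_closedBall_zero_iff, norm_smul, norm_sphPt, mul_one,
            Real.norm_eq_abs]
          rw [abs_le]; constructor <;> linarith)
        linarith
  have hfin : (Emax ∪ (fun i => sphPt (a.θ i)) '' P).Finite :=
    (hE.subset hEmaxE).union ((Set.toFinite P).image _)
  have main := half hsm.continuous {i | 0 < deriv (deriv a.g) (a.θ i) ∧ a.ν i = -1} a.θ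
    (by
      rintro i ⟨hi, -⟩
      simpa only [hfg] using strict_min hdg (a.node_crit i) hi)
    (by
      rintro i ⟨hi, hν⟩
      refine rad_lt (hdf _) ?_
      have := (hrad i).2 hi
      rw [hν] at this
      simpa using this)
    (by
      intro i _ j _ h
      rw [hfg, hfg] at h
      exact a.values_distinct i j h)
    (hfin.subset hsub) (hE.subset hEminE)
  rw [← hEmin] at main
  have c1 := Set.ncard_le_ncard hsub hfin
  have c2 := Set.ncard_union_le Emax ((fun i => sphPt (a.θ i)) '' P)
  have c3 := Set.ncard_image_le (f := fun i => sphPt (a.θ i)) (Set.toFinite P)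
  have hdis : Disjoint Emax Emin := by
    rw [Set.disjoint_left]
    rintro x ⟨hxb, hmx⟩ ⟨-, hmn⟩
    have hev : ∀ᶠ y in nhds x, f y = f x := by
      filter_upwards [hmx, hmn] with y h1 h2
      exact le_antisymm h1 h2
    have hmem : E ∈ nhds x := by
      filter_upwards [hev.eventually_nhds, hev, Metric.isOpen_ball.mem_nhds hxb] with y h1 h2 h3
      refine ⟨h3, Or.inl ?_⟩
      filter_upwards [h1] with z hz
      rw [hz, h2]
    exact infinite_of_mem_nhds x hmem hE
  have c4 := Set.ncard_union_eq hdis (hE.subset hEmaxE) (hE.subset hEminE)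
  have c5 := Set.ncard_le_ncard (Set.union_subset hEmaxE hEminE) hE
  omega

/-- The negated ribbon. -/
def negRibbon {n : ℕ} (a : Ribbon n) : Ribbon n where
  g := fun t => - a.g t
  θ := a.θ
  ν := a.ν
  n_even := a.n_even
  n_pos := a.n_pos
  smooth_g := a.smooth_g.neg
  periodic_g := fun t => congrArg Neg.neg (a.periodic_g t)
  theta_mem := a.theta_mem
  theta_mono := a.theta_mono
  node_crit := fun i => by simp [a.node_crit i]
  node_nondeg := fun i => by
    have := a.node_nondeg i
    simpa using this
  crit_only := fun t ht h => a.crit_only t ht (by simpa using h)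
  values_distinct := fun i j h => a.values_distinct i j (neg_injective h)
  nu_sign := a.nu_sign

lemma neg_ext {n : ℕ} (a : Ribbon n) (f : E2 → ℝ) (hf : IsExtension a f) :
    IsExtension (negRibbon a) (fun x => - f x) := by
  obtain ⟨h1, h2, h3, h4⟩ := hf
  refine ⟨h1.neg, fun t => by simp [negRibbon, h2], fun x hx => ?_, fun i => ?_⟩
  · rw [fderiv_fun_neg]
    exact neg_ne_zero.2 (h3 x hx)
  · have := h4 i
    simp only [inner_gradient_left] at this ⊢
    simp only [negRibbon, deriv.fun_neg', fderiv_fun_neg]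
    constructor
    · intro h
      have := this.2 (by linarith)
      simpa using this
    · intro h
      have := this.1 (by linarith)
      simpa using this

/-- Every extension `f` of a ribbon `a` with signature `σ` has at least `1 − σ/2` points in
the open unit disk that are local extrema (local maxima or local minima) of `f`. -/
theorem stmt_8 (n : ℕ) (a : Ribbon n) (f : E2 → ℝ) (hf : IsExtension a f) :
    (((1 - a.sigma / 2).toNat : ℕ∞) ≤
      {x : E2 | x ∈ Metric.ball (0 : E2) 1 ∧ (IsLocalMax f x ∨ IsLocalMin f x)}.encard) := by
  by_cases hE : {x : E2 | x ∈ Metric.ball (0 : E2) 1 ∧ (IsLocalMax f x ∨ IsLocalMin f x)}.Finite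
  swap
  · rw [Set.Infinite.encard_eq hE]
    exact le_top
  have h1 := ribbon_half a f hf hE
  have hset : {x : E2 | x ∈ Metric.ball (0 : E2) 1 ∧
        (IsLocalMax (fun x => - f x) x ∨ IsLocalMin (fun x => - f x) x)} =
      {x : E2 | x ∈ Metric.ball (0 : E2) 1 ∧ (IsLocalMax f x ∨ IsLocalMin f x)} := by
    ext x
    have e1 : IsLocalMax (fun x => - f x) x ↔ IsLocalMin f x :=
      ⟨fun h => by simpa using h.neg, fun h => h.neg⟩
    have e2 : IsLocalMin (fun x => - f x) x ↔ IsLocalMax f x :=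
      ⟨fun h => by simpa using h.neg, fun h => h.neg⟩
    simp only [Set.mem_ofPred_eq, e1, e2]
    tauto
  have h2 := ribbon_half (negRibbon a) (fun x => - f x) (neg_ext a f hf) (by rw [hset]; exact hE)
  rw [hset] at h2
  simp only [negRibbon, deriv.fun_neg', Left.neg_neg_iff, Left.neg_pos_iff] at h2
  rw [← hE.cast_ncard_eq]
  norm_cast
  have hs : a.sigma = ({i | 0 < deriv (deriv a.g) (a.θ i) ∧ a.ν i = 1}.ncard : ℤ)
      + {i | deriv (deriv a.g) (a.θ i) < 0 ∧ a.ν i = 1}.ncard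
      - {i | 0 < deriv (deriv a.g) (a.θ i) ∧ a.ν i = -1}.ncard
      - {i | deriv (deriv a.g) (a.θ i) < 0 ∧ a.ν i = -1}.ncard := by
    classical
    have hn : ∀ p : Fin n → Prop, ({i | p i}.ncard : ℤ) = ∑ i, if p i then 1 else 0 := by
      intro p
      rw [Finset.sum_boole, Set.ncard_eq_toFinset_card']
      simp
    rw [hn, hn, hn, hn, ← Finset.sum_add_distrib, ← Finset.sum_sub_distrib,
      ← Finset.sum_sub_distrib, Ribbon.sigma]
    refine Finset.sum_congr rfl fun i _ => ?_
    rcases lt_or_gt_of_ne (a.node_nondeg i) with h | h <;>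
      rcases a.nu_sign i with h' | h' <;> simp [h, h', h.not_gt]
  omega
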